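/- arXiv:2002.01916 — 4 statements merged into one kernel-verified Lean document; each statement's English description precedes it below -/
import Mathlib

section
/- Let x, y ∈ ℝ^n and w ∈ ℝ satisfy: x^{[j]} ≤ y^{[j]} for every j = 1,…,n; w ≤ x_i for every i; and w ≤ y_i for every i. Let x' be obtained from x by replacing one entry achieving the maximum of x with the value w. Let y' be either equal to y, or obtained from y by replacing exactly one entry of y with some value v with v ≥ w. Then x'^{[j]} ≤ y'^{[j]} for every j = 1,…,n. -/
/-- `nthLargest x j` is the `j`-th largest entry of `x : Fin n → ℝ` (0-indexed),
so `nthLargest x 0` is the maximum entry and `nthLargest x (n-1)` is the minimum: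
it is the `j`-th component of the rearrangement of `x` sorted in decreasing order. -/
noncomputable def nthLargest {n : ℕ} (x : Fin n → ℝ) (j : Fin n) : ℝ :=
  x (Tuple.sort x j.rev)

/-- Counting characterization of the `j`-th largest entry. -/
theorem le_nthLargest_iff {n : ℕ} (x : Fin n → ℝ) (j : Fin n) (c : ℝ) :
    c ≤ nthLargest x j ↔ (j : ℕ) < (Finset.univ.filter (fun i => c ≤ x i)).card := by
  have hanti : Antitone (nthLargest x) := fun a b hab =>
    Tuple.monotone_sort x (Fin.rev_le_rev.mpr hab)
  have hcard : (Finset.univ.filter (fun i => c ≤ nthLargest x i)).card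
      = (Finset.univ.filter (fun i => c ≤ x i)).card := by
    refine Finset.card_equiv (Fin.revPerm.trans (Tuple.sort x)) ?_
    intro i
    simp only [Finset.mem_filter, Finset.mem_univ, true_and]
    rfl
  rw [← hcard]
  constructor
  · intro h
    have hsub : Finset.Iic j ⊆ Finset.univ.filter (fun i => c ≤ nthLargest x i) := by
      intro i hi
      simp only [Finset.mem_Iic] at hi
      simpa using h.trans (hanti hi)
    have := Finset.card_le_card hsub
    rw [Fin.card_Iic] at this
    omega
  · intro h
    by_contra hc
    have hsub : Finset.univ.filter (fun i => c ≤ nthLargest x i) ⊆ Finset.Iio j := by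
      intro i hi
      simp only [Finset.mem_filter, Finset.mem_univ, true_and] at hi
      simp only [Finset.mem_Iio]
      by_contra hij
      exact hc (hi.trans (hanti (not_lt.mp hij)))
    have := Finset.card_le_card hsub
    rw [Fin.card_Iio] at this
    omega

/-- Packet-delivery lemma (sufficiency form): sorted dominance is preserved when the
dominated vector has a maximal entry replaced by the common lower bound `w`, while the
dominating vector is unchanged or has one entry replaced by some `v ≥ w`. -/
theorem stmt_3 {n : ℕ} (x y : Fin n → ℝ) (w : ℝ)
    (hdom : ∀ j : Fin n, nthLargest x j ≤ nthLargest y j)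
    (hwx : ∀ i, w ≤ x i) (hwy : ∀ i, w ≤ y i)
    (i₀ : Fin n) (hmax : ∀ i, x i ≤ x i₀)
    (x' : Fin n → ℝ) (hx' : x' = Function.update x i₀ w)
    (y' : Fin n → ℝ)
    (hy' : y' = y ∨ ∃ (i : Fin n) (v : ℝ), w ≤ v ∧ y' = Function.update y i v) :
    ∀ j : Fin n, nthLargest x' j ≤ nthLargest y' j := by 
  intro j
  have hwy' : ∀ i, w ≤ y' i := by
    intro i
    rcases hy' with rfl | ⟨k, v, hv, rfl⟩
    · exact hwy i
    · by_cases h : i = k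
      · subst h
        simpa using hv
      · simpa [h] using hwy i
  rw [le_nthLargest_iff]
  have hj := (le_nthLargest_iff x' j _).mp le_rfl
  generalize nthLargest x' j = c at hj ⊢
  by_cases hcw : c ≤ w
  · rw [Finset.filter_true_of_mem (fun i _ => hcw.trans (hwy' i))]
    simp
  have hne : x' i₀ = w := by simp [hx']
  have hsub : Finset.univ.filter (fun i => c ≤ x' i)
      ⊆ (Finset.univ.filter (fun i => c ≤ x i)).erase i₀ := by
    intro i hi
    simp only [Finset.mem_filter, Finset.mem_univ, true_and] at hi
    have hi0 : i ≠ i₀ := by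
      rintro rfl
      exact hcw (hne ▸ hi)
    simp only [hx', Function.update_of_ne hi0] at hi
    simp [hi0, hi]
  have h1 := Finset.card_le_card hsub
  have hmem : i₀ ∈ Finset.univ.filter (fun i => c ≤ x i) := by
    obtain ⟨i, hi⟩ := Finset.card_pos.mp (by omega :
      0 < ((Finset.univ.filter (fun i => c ≤ x i)).erase i₀).card)
    simp only [Finset.mem_erase, Finset.mem_filter, Finset.mem_univ, true_and] at hi
    simpa using hi.2.trans (hmax i)
  have h2 := Finset.card_erase_add_one hmem
  have h3 : (Finset.univ.filter (fun i => c ≤ x i)).card ≤ n := by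
    simpa using Finset.card_le_univ (Finset.univ.filter (fun i => c ≤ x i))
  have hjn : (j : ℕ) + 1 < n := by omega
  have h4 : c ≤ nthLargest x ⟨j + 1, hjn⟩ := by
    rw [le_nthLargest_iff]
    simp only
    omega
  have h5 := (le_nthLargest_iff y _ c).mp (h4.trans (hdom _))
  simp only at h5
  rcases hy' with rfl | ⟨k, v, hv, rfl⟩
  · omega
  · have hsub' : (Finset.univ.filter (fun i => c ≤ y i)).erase k
        ⊆ Finset.univ.filter (fun i => c ≤ Function.update y k v i) := by
      intro i hi
      simp only [Finset.mem_erase, Finset.mem_filter, Finset.mem_univ, true_and] at hi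
      simp [Function.update_of_ne hi.1, hi.2]
    have h6 := Finset.card_le_card hsub'
    have h7 := Finset.pred_card_le_card_erase (s := Finset.univ.filter (fun i => c ≤ y i)) (a := k)
    omega
end

section
/- Let x, y ∈ ℝ^n (with n ≥ 1) and w ∈ ℝ satisfy: x^{[j]} ≤ y^{[j]} for every j = 1,…,n, and w ≤ x_i for every i. Let x' be obtained from x by replacing one entry achieving the maximum of x with the value w. Let y' be obtained from y by replacing one entry of y whose value a satisfies a < max_i y_i with some value v with v ≥ w. Then there exists an index j ∈ {1,…,n} such that x'^{[j]} < y'^{[j]}. -/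
theorem sum_nthLargest {n : ℕ} (x : Fin n → ℝ) : ∑ j, nthLargest x j = ∑ i, x i := by
  unfold nthLargest
  exact Equiv.sum_comp (Fin.revPerm.trans (Tuple.sort x)) x

theorem le_nthLargest_zero {n : ℕ} (x : Fin n → ℝ) (j : Fin n) (hj : j.val = 0) (i : Fin n) :
    x i ≤ nthLargest x j := by
  have h := Tuple.monotone_sort x
  have h2 : (Tuple.sort x).symm i ≤ j.rev := by
    rw [Fin.le_def, Fin.val_rev]
    omega
  simpa [nthLargest] using h h2

theorem sum_update_eq {n : ℕ} (x : Fin n → ℝ) (i : Fin n) (w : ℝ) :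
    ∑ k, Function.update x i w k = ∑ k, x k - x i + w := by
  rw [Finset.sum_update_of_mem (Finset.mem_univ i),
    ← Finset.add_sum_erase Finset.univ x (Finset.mem_univ i), Finset.sdiff_singleton_eq_erase]
  ring

/-- Necessity, Case 2: if the alternative policy serves a stream whose age is strictly
below the class maximum, then some order statistic becomes strictly smaller under the
proposed policy. -/
theorem stmt_4 {n : ℕ} (hn : 1 ≤ n) (x y : Fin n → ℝ) (w : ℝ)
    (hdom : ∀ j : Fin n, nthLargest x j ≤ nthLargest y j)
    (hwx : ∀ i, w ≤ x i)
    (i₀ : Fin n) (hmax : ∀ i, x i ≤ x i₀)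
    (x' : Fin n → ℝ) (hx' : x' = Function.update x i₀ w)
    (i₁ : Fin n) (hlt : ∃ i, y i₁ < y i)
    (v : ℝ) (hv : w ≤ v)
    (y' : Fin n → ℝ) (hy' : y' = Function.update y i₁ v) :
    ∃ j : Fin n, nthLargest x' j < nthLargest y' j := by
  by_contra! hcon
  have h1 := Finset.sum_le_sum (fun j (_ : j ∈ Finset.univ) => hcon j)
  rw [sum_nthLargest, sum_nthLargest, hx', hy', sum_update_eq, sum_update_eq] at h1
  obtain ⟨k, hk⟩ := hlt
  have h2 := Finset.single_le_sum (f := fun j => nthLargest y j - nthLargest x j)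
    (fun j _ => sub_nonneg.2 (hdom j)) (Finset.mem_univ (⟨0, hn⟩ : Fin n))
  rw [Finset.sum_sub_distrib, sum_nthLargest, sum_nthLargest] at h2
  have h3 := le_nthLargest_zero y ⟨0, hn⟩ rfl k
  have h4 : nthLargest x ⟨0, hn⟩ ≤ x i₀ := hmax _
  linarith
end

section
/- Let x, y ∈ ℝ^n (with n ≥ 1) and w ∈ ℝ satisfy: x^{[j]} ≤ y^{[j]} for every j = 1,…,n; w ≤ x_i for every i; and w < y_i for every i. Let x' be obtained from x by replacing one entry achieving the maximum of x with the value w. Let y' be obtained from y by replacing one entry of y with some value v with v > w. Then there exists an index j ∈ {1,…,n} such that x'^{[j]} < y'^{[j]}; in particular x'^{[n]} < y'^{[n]}. -/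
/-- Necessity, Case 3: if every entry of `y` is strictly above `w` and the alternative
policy replaces one entry by some `v > w` while the proposed policy replaces a maximal
entry of `x` by `w`, then some order statistic (in particular the minimum) becomes
strictly smaller under the proposed policy. -/
theorem stmt_5 {n : ℕ} (x y : Fin (n + 1) → ℝ) (w : ℝ)
    (hdom : ∀ j : Fin (n + 1), nthLargest x j ≤ nthLargest y j)
    (hwx : ∀ i, w ≤ x i) (hwy : ∀ i, w < y i)
    (i₀ : Fin (n + 1)) (hmax : ∀ i, x i ≤ x i₀)
    (x' : Fin (n + 1) → ℝ) (hx' : x' = Function.update x i₀ w)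
    (i₁ : Fin (n + 1)) (v : ℝ) (hv : w < v)
    (y' : Fin (n + 1) → ℝ) (hy' : y' = Function.update y i₁ v) :
    (∃ j : Fin (n + 1), nthLargest x' j < nthLargest y' j) ∧
      nthLargest x' (Fin.last n) < nthLargest y' (Fin.last n) := by
  have key : nthLargest x' (Fin.last n) < nthLargest y' (Fin.last n) := by
    have h1 : nthLargest x' (Fin.last n) ≤ w := by
      have hm := Tuple.monotone_sort x' (Fin.zero_le ((Tuple.sort x').symm i₀))
      simp only [Function.comp, Equiv.apply_symm_apply] at hm
      have hw : x' i₀ = w := by rw [hx']; simp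
      rw [hw] at hm
      unfold nthLargest
      rw [Fin.rev_last]
      exact hm
    have h2 : ∀ i, w < y' i := by
      intro i
      rw [hy', Function.update_apply]
      split_ifs
      · exact hv
      · exact hwy i
    exact lt_of_le_of_lt h1 (h2 _)
  exact ⟨⟨_, key⟩, key⟩
end

section
/- Let y ∈ ℝ^n, let a be one entry of y, and let y' be obtained from y by replacing that entry of value a with an arbitrary real value v. Then for every j ∈ {1,…,n} such that y^{[j]} > a, we have y'^{[j]} ≥ y^{[j]}. -/
/-- Replacing one entry of value `a` by an arbitrary value: every order statistic that was
strictly above `a` does not decrease. -/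
theorem stmt_8 {n : ℕ} (y : Fin n → ℝ) (i₀ : Fin n) (a : ℝ) (ha : y i₀ = a) (v : ℝ)
    (y' : Fin n → ℝ) (hy' : y' = Function.update y i₀ v) :
    ∀ j : Fin n, a < nthLargest y j → nthLargest y j ≤ nthLargest y' j := by
  intro j hj
  unfold nthLargest at *
  by_contra! h
  have key : ∀ i ∈ Finset.Iic j.rev,
      (Tuple.sort y).symm (Tuple.sort y' i) ∈ Finset.Iio j.rev := by
    intro i hi
    rw [Finset.mem_Iic] at hi
    rw [Finset.mem_Iio]
    have h1 : y' (Tuple.sort y' i) ≤ y' (Tuple.sort y' j.rev) := Tuple.monotone_sort y' hi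
    have h2 : y (Tuple.sort y' i) < y (Tuple.sort y j.rev) := by
      by_cases e : Tuple.sort y' i = i₀
      · rw [e, ha]
        exact hj
      · have h3 : y' (Tuple.sort y' i) = y (Tuple.sort y' i) := by
          generalize Tuple.sort y' i = p at e
          rw [hy', Function.update_of_ne e]
        linarith
    by_contra! h4
    have h5 := Tuple.monotone_sort y h4
    simp only [Function.comp_apply, Equiv.apply_symm_apply] at h5
    linarith
  have hc := Finset.card_le_card_of_injOn _ key
    (((Tuple.sort y').trans (Tuple.sort y).symm).injective.injOn)
  rw [Fin.card_Iic, Fin.card_Iio] at hc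
  omega
end
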